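/- (L² bound for the ansatz operator, d = 2.) There exists a constant C > 0, independent of ε and n, such that for every ε ∈ (0,1), every n ≥ 1 and every symmetric ψ ∈ ΓL²_n with ‖(−L₀)^{1/2}ψ‖ < ∞: ‖S^ε A⁺_ε ψ‖ ≤ C λ_ε n ‖(−L₀)^{1/2} ψ‖, where the Fock norm on the left is ‖f‖² = (n+1)! Σ |f|² and S^ε is applied on ΓL²_{n+1} (the right-hand side corresponds to C λ_ε ‖N(−L₀)^{1/2}ψ‖ with N the number operator). -/

import Mathlib

open scoped BigOperators
open scoped Classical

noncomputable section

namespace SBE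

/-- Lattice points of `ℤ^d`. -/
abbrev ZLat (d : ℕ) := Fin d → ℤ

/-- Kernels of the `n`-th chaos: functions on `n`-tuples of lattice points. -/
abbrev Chaos (d n : ℕ) := (Fin n → ZLat d) → ℂ

/-- Squared Euclidean norm of a lattice point. -/
def nsq {d : ℕ} (k : ZLat d) : ℝ := ∑ i, ((k i : ℝ))^2

/-- Euclidean norm of a lattice point. -/
def eN {d : ℕ} (k : ZLat d) : ℝ := Real.sqrt (nsq k)

/-- Supremum norm of a lattice point. -/
def sN {d : ℕ} (k : ZLat d) : ℝ := ((Finset.univ.sup fun i => (k i).natAbs : ℕ) : ℝ)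

/-- The norm used in the Fourier cutoff: Euclidean if `d = 2`, supremum otherwise. -/
def cutNorm (d : ℕ) (k : ZLat d) : ℝ := if d = 2 then eN k else sN k

/-- `w · k`. -/
def dotw {d : ℕ} (w : Fin d → ℝ) (k : ZLat d) : ℝ := ∑ i, w i * (k i : ℝ)

/-- `|k_{1:n}|² = Σ_i |k_i|²`. -/
def wSq {d n : ℕ} (k : Fin n → ZLat d) : ℝ := ∑ a, nsq (k a)

/-- The coupling constant `λ_ε`. -/
def lam (d : ℕ) (ε : ℝ) : ℝ :=
  if d = 2 then (Real.sqrt (Real.log (1 / ε^2)))⁻¹ else ε ^ ((d:ℝ)/2 - 1)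

/-- The Fourier cutoff indicator `J^ε_{ℓ,m}`. -/
def Jind (d : ℕ) (ε : ℝ) (l m : ZLat d) : ℝ :=
  if 0 < ε * cutNorm d l ∧ ε * cutNorm d l ≤ 1 ∧
     0 < ε * cutNorm d m ∧ ε * cutNorm d m ≤ 1 ∧
     0 < ε * cutNorm d (l + m) ∧ ε * cutNorm d (l + m) ≤ 1 then 1 else 0

/-- Symmetry of a kernel under permutation of its arguments. -/
def Symm {d n : ℕ} (f : Chaos d n) : Prop :=
  ∀ (σ : Equiv.Perm (Fin n)) (k : Fin n → ZLat d), f (k ∘ σ) = f k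

/-- A kernel vanishes whenever one of its arguments is the zero frequency
(i.e. it is really a function on `(ℤ^d_0)^n`). -/
def SuppOk {d n : ℕ} (f : Chaos d n) : Prop :=
  ∀ k : Fin n → ZLat d, (∃ a, k a = 0) → f k = 0

/-- Summand of `‖(-L₀)^s f‖²`. -/
def sobTerm {d n : ℕ} (s : ℝ) (f : Chaos d n) (k : Fin n → ZLat d) : ℝ :=
  (wSq k / 2) ^ (2*s) * ‖f k‖^2

/-- `‖(-L₀)^s f‖² = n! Σ_k (|k_{1:n}|²/2)^{2s} |f(k)|²`. -/
def sobSq {d n : ℕ} (s : ℝ) (f : Chaos d n) : ℝ := (n.factorial : ℝ) * ∑' k, sobTerm s f k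

/-- Remove the entries `i < j` from an `(n+2)`-tuple (order preservingly). -/
def remove2 {X : Type*} {n : ℕ} (k : Fin (n+2) → X) (i j : Fin (n+2)) (h : i < j) :
    Fin n → X :=
  fun a => k (j.succAbove ((Fin.castLT i
    (Nat.lt_of_lt_of_le (Fin.lt_def.mp h) (Nat.lt_succ_iff.mp j.isLt))).succAbove a))

/-- The operator `A⁺_ε : ΓL²_{n+1} → ΓL²_{n+2}`. -/
def Aplus (d : ℕ) (w : Fin d → ℝ) (ε : ℝ) {n : ℕ} (f : Chaos d (n+1)) : Chaos d (n+2) :=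
  fun k => -(2 * Complex.I / (((2*Real.pi) ^ ((d:ℝ)/2) : ℝ) : ℂ)) *
      ((lam d ε / ((n:ℝ)+2) : ℝ) : ℂ) *
    ∑ i : Fin (n+2), ∑ j : Fin (n+2),
      if h : i < j then
        ((dotw w (k i + k j) : ℝ) : ℂ) * ((Jind d ε (k i) (k j) : ℝ) : ℂ) *
          f (Fin.cons (k i + k j) (remove2 k i j h))
      else 0

/-- The operator `A⁻_ε : ΓL²_{n+2} → ΓL²_{n+1}`. -/
def Aminus (d : ℕ) (w : Fin d → ℝ) (ε : ℝ) {n : ℕ} (f : Chaos d (n+2)) : Chaos d (n+1) :=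
  fun k => (2 * Complex.I / (((2*Real.pi) ^ ((d:ℝ)/2) : ℝ) : ℂ)) *
      ((((n:ℝ)+2) * lam d ε : ℝ) : ℂ) *
    ∑ j : Fin (n+1), ((dotw w (k j) : ℝ) : ℂ) *
      ∑' l : ZLat d, ((Jind d ε l (k j - l) : ℝ) : ℂ) *
        f (Fin.cons l (Fin.cons (k j - l) (fun a => k (j.succAbove a))))

/-- `L^ε(x) = λ_ε² log(1 + 1/(ε²x))`. -/
def Leps (ε x : ℝ) : ℝ := (lam 2 ε)^2 * Real.log (1 + 1/(ε^2 * x))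

/-- `G(x) = c⁻¹ [(3cx/(2π) + 1)^{2/3} − 1]` (with `c = |w|²`). -/
def Gfun (c x : ℝ) : ℝ := c⁻¹ * ((3*c*x/(2*Real.pi) + 1) ^ ((2:ℝ)/3) - 1)

/-- `|w|²`. -/
def wnSq {d : ℕ} (w : Fin d → ℝ) : ℝ := ∑ i, (w i)^2

/-- `(w·k)²_{1:n} = Σ_i (w·k_i)²`. -/
def wdotSq {d n : ℕ} (w : Fin d → ℝ) (k : Fin n → ZLat d) : ℝ := ∑ a, (dotw w (k a))^2

/-- Fourier multiplier of `S^ε = (−L₀ − L₀^w G^ε)⁻¹`. -/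
def sigma' {n : ℕ} (w : Fin 2 → ℝ) (ε : ℝ) (k : Fin n → ZLat 2) : ℝ :=
  2 / (wSq k + wdotSq w k * Gfun (wnSq w) (Leps ε (wSq k / 2)))

/-- The operator `S^ε` acting diagonally on a kernel. -/
def SepsA (w : Fin 2 → ℝ) (ε : ℝ) {n : ℕ} (g : Chaos 2 n) : Chaos 2 n :=
  fun k => ((sigma' w ε k : ℝ) : ℂ) * g k

lemma nsq_nonneg {d : ℕ} (k : ZLat d) : 0 ≤ nsq k := Finset.sum_nonneg fun _ _ => sq_nonneg _

lemma wSq_nonneg {d n : ℕ} (k : Fin n → ZLat d) : 0 ≤ wSq k :=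
  Finset.sum_nonneg fun _ _ => nsq_nonneg _

lemma nsq_le_wSq {d n : ℕ} (k : Fin n → ZLat d) (a : Fin n) : nsq (k a) ≤ wSq k :=
  Finset.single_le_sum (f := fun a => nsq (k a)) (fun _ _ => nsq_nonneg _) (Finset.mem_univ a)

lemma Leps_nonneg (ε x : ℝ) (hx : 0 ≤ x) : 0 ≤ Leps ε x := by
  unfold Leps
  have : 0 ≤ 1 / (ε^2 * x) := by positivity
  exact mul_nonneg (sq_nonneg _) (Real.log_nonneg (by linarith))

lemma Gfun_nonneg (c x : ℝ) (hc : 0 ≤ c) (hx : 0 ≤ x) : 0 ≤ Gfun c x := by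
  unfold Gfun
  have h : 0 ≤ 3*c*x/(2*Real.pi) := by have := Real.pi_pos; positivity
  have := Real.one_le_rpow (x := 3*c*x/(2*Real.pi) + 1) (z := (2:ℝ)/3) (by linarith) (by norm_num)
  exact mul_nonneg (inv_nonneg.2 hc) (by linarith)

lemma wnSq_nonneg {d : ℕ} (w : Fin d → ℝ) : 0 ≤ wnSq w := Finset.sum_nonneg fun _ _ => sq_nonneg _

lemma denom_ge {n : ℕ} (w : Fin 2 → ℝ) (ε : ℝ) (k : Fin n → ZLat 2) :
    wSq k ≤ wSq k + wdotSq w k * Gfun (wnSq w) (Leps ε (wSq k / 2)) := by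
  have h1 : 0 ≤ wdotSq w k := Finset.sum_nonneg fun _ _ => sq_nonneg _
  have h2 := Gfun_nonneg (wnSq w) (Leps ε (wSq k / 2)) (wnSq_nonneg w)
    (Leps_nonneg _ _ (by have := wSq_nonneg k; linarith))
  have := mul_nonneg h1 h2
  linarith

lemma sigma_nonneg {n : ℕ} (w : Fin 2 → ℝ) (ε : ℝ) (k : Fin n → ZLat 2) : 0 ≤ sigma' w ε k := by
  unfold sigma'
  exact div_nonneg (by norm_num) ((wSq_nonneg k).trans (denom_ge w ε k))

lemma sigma_le {n : ℕ} (w : Fin 2 → ℝ) (ε : ℝ) (k : Fin n → ZLat 2) (a : Fin n)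
    (h : 0 < nsq (k a)) : sigma' w ε k ≤ 2 / nsq (k a) := by
  unfold sigma'
  exact div_le_div_of_nonneg_left (by norm_num) h ((nsq_le_wSq k a).trans (denom_ge w ε k))

lemma dotw_sq_le {d : ℕ} (w : Fin d → ℝ) (k : ZLat d) : dotw w k ^ 2 ≤ wnSq w * nsq k := by
  unfold dotw wnSq nsq
  exact Finset.sum_mul_sq_le_sq_mul_sq _ _ _

lemma Jind_nonneg (d : ℕ) (ε : ℝ) (l m : ZLat d) : 0 ≤ Jind d ε l m := by
  unfold Jind; split_ifs <;> norm_num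

lemma Jind_cases (ε : ℝ) (l m : ZLat 2) :
    Jind 2 ε l m = 0 ∨ (Jind 2 ε l m = 1 ∧ 0 < nsq l) := by
  unfold Jind
  split_ifs with h
  · right
    refine ⟨rfl, ?_⟩
    rcases (nsq_nonneg l).lt_or_eq with h0 | h0
    · exact h0
    · have := h.1
      simp [cutNorm, eN, ← h0] at this
  · left; rfl

/-- The weight `1/|x|⁴`. -/
def bw (x : ZLat 2) : ℝ := (1 / nsq x) ^ 2

lemma bw_summable : Summable bw := by
  have h := EisensteinSeries.summable_one_div_norm_rpow (k := 4) (by norm_num)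
  refine Summable.of_nonneg_of_le (fun x => sq_nonneg _) (fun x => ?_) h
  unfold bw
  by_cases hx : x = 0
  · subst hx
    simp [nsq]
  have hn : 0 < ‖x‖ := norm_pos_iff.2 hx
  have hle : ‖x‖ ^ 2 ≤ nsq x := by
    have h1 : ‖x‖ ≤ Real.sqrt (nsq x) := by
      refine (pi_norm_le_iff_of_nonneg (Real.sqrt_nonneg _)).2 fun i => ?_
      apply Real.le_sqrt_of_sq_le
      have := Finset.single_le_sum (f := fun i => ((x i : ℝ))^2) (fun _ _ => sq_nonneg _)
        (Finset.mem_univ i)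
      simpa [nsq, Int.norm_eq_abs] using this
    calc ‖x‖ ^ 2 ≤ Real.sqrt (nsq x) ^ 2 := by gcongr
      _ = nsq x := Real.sq_sqrt (nsq_nonneg x)
  have : ‖x‖ ^ (-4 : ℝ) = (1 / ‖x‖ ^ 2) ^ 2 := by
    rw [Real.rpow_neg hn.le, show (4:ℝ) = ((4:ℕ):ℝ) by norm_num, Real.rpow_natCast]
    field_simp
  rw [this]
  have h2 : 0 < ‖x‖ ^ 2 := by positivity
  have h3 : 0 ≤ 1 / nsq x := one_div_nonneg.2 (nsq_nonneg x)
  gcongr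

/-- The change of variables. -/
def phi {n : ℕ} (i j : Fin (n+2)) (h : i < j) (k : Fin (n+2) → ZLat 2) :
    ZLat 2 × (Fin (n+1) → ZLat 2) :=
  (k i, Fin.cons (k i + k j) (remove2 k i j h))

lemma phi_inj {n : ℕ} (i j : Fin (n+2)) (h : i < j) : Function.Injective (phi i j h) := by
  intro k k' hk
  have h1 : k i = k' i := congrArg Prod.fst hk
  have h2 := congrArg Prod.snd hk
  have h3 : k i + k j = k' i + k' j := by simpa [phi] using congrFun h2 0
  have h4 : k j = k' j := by rw [h1] at h3; exact add_left_cancel h3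
  funext b
  by_cases hj : b = j
  · rw [hj, h4]
  obtain ⟨b', rfl⟩ := Fin.exists_succAbove_eq hj
  have hlt : (i : ℕ) < n + 1 :=
    Nat.lt_of_lt_of_le (Fin.lt_def.mp h) (Nat.lt_succ_iff.mp j.isLt)
  by_cases hi : b' = Fin.castLT i hlt
  · have : j.succAbove b' = i := by
      rw [hi, Fin.succAbove_of_castSucc_lt]
      · simp
      · simpa using h
    rw [this, h1]
  obtain ⟨a, rfl⟩ := Fin.exists_succAbove_eq hi
  simpa [phi, remove2] using congrFun h2 a.succ

/-- The summand after the change of variables. -/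
def Fm {n : ℕ} (ψ : Chaos 2 (n+1)) (p : ZLat 2 × (Fin (n+1) → ZLat 2)) : ℝ :=
  bw p.1 * (nsq (p.2 0) * ‖ψ p.2‖ ^ 2)

lemma Fm_nonneg {n : ℕ} (ψ : Chaos 2 (n+1)) (p) : 0 ≤ Fm ψ p :=
  mul_nonneg (sq_nonneg _) (mul_nonneg (nsq_nonneg _) (sq_nonneg _))

lemma lam_nonneg (ε : ℝ) : 0 ≤ lam 2 ε := by
  simp [lam]

lemma pair_bound (w : Fin 2 → ℝ) (ε : ℝ) {n : ℕ} (ψ : Chaos 2 (n+1)) (k : Fin (n+2) → ZLat 2)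
    (i j : Fin (n+2)) (h : i < j) :
    (sigma' w ε k * ‖((dotw w (k i + k j) : ℝ) : ℂ) * ((Jind 2 ε (k i) (k j) : ℝ) : ℂ) *
          ψ (Fin.cons (k i + k j) (remove2 k i j h))‖) ^ 2
      ≤ 4 * wnSq w * Fm ψ (phi i j h k) := by
  rcases Jind_cases ε (k i) (k j) with hJ | ⟨hJ, hpos⟩
  · rw [hJ]
    simp only [Complex.ofReal_zero, mul_zero, zero_mul, norm_zero]
    have := mul_nonneg (wnSq_nonneg w) (Fm_nonneg ψ (phi i j h k))
    nlinarith
  · rw [hJ]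
    simp only [Complex.ofReal_one, mul_one, norm_mul, Complex.norm_real, Real.norm_eq_abs]
    have h1 : sigma' w ε k ^ 2 ≤ (2 / nsq (k i)) ^ 2 :=
      pow_le_pow_left₀ (sigma_nonneg w ε k) (sigma_le w ε k i hpos) 2
    have h2 := dotw_sq_le w (k i + k j)
    have h3 := nsq_nonneg (k i + k j)
    have h4 := wnSq_nonneg w
    simp only [mul_pow, sq_abs, Fm, phi, bw, Fin.cons_zero]
    calc _ ≤ (2 / nsq (k i)) ^ 2 * (wnSq w * nsq (k i + k j) *
          ‖ψ (Fin.cons (k i + k j) (remove2 k i j h))‖ ^ 2) := by gcongr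
      _ = _ := by ring

lemma point_bound (w : Fin 2 → ℝ) (ε : ℝ) {n : ℕ} (ψ : Chaos 2 (n+1)) (k : Fin (n+2) → ZLat 2) :
    sobTerm (0:ℝ) (SepsA w ε (Aplus 2 w ε ψ)) k ≤
      ∑ i : Fin (n+2), ∑ j : Fin (n+2), (lam 2 ε ^ 2 * (4 * wnSq w)) *
        (if h : i < j then Fm ψ (phi i j h k) else 0) := by
  set t : Fin (n+2) → Fin (n+2) → ℂ := fun i j => if h : i < j then
        ((dotw w (k i + k j) : ℝ) : ℂ) * ((Jind 2 ε (k i) (k j) : ℝ) : ℂ) *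
          ψ (Fin.cons (k i + k j) (remove2 k i j h))
      else 0 with ht
  have hA : ‖Aplus 2 w ε ψ k‖ ≤ lam 2 ε / ((n:ℝ)+2) * ∑ i, ∑ j, ‖t i j‖ := by
    unfold Aplus
    have hc : ‖-(2 * Complex.I / (((2*Real.pi) ^ (((2:ℕ):ℝ)/2) : ℝ) : ℂ))‖ ≤ 1 := by
      have hp := Real.pi_gt_three
      rw [norm_neg, norm_div, norm_mul, Complex.norm_real, Complex.norm_I]
      norm_num
      rw [abs_of_pos (by linarith), div_le_one (by linarith)]
      linarith
    have hl : ‖((lam 2 ε / ((n:ℝ)+2) : ℝ) : ℂ)‖ = lam 2 ε / ((n:ℝ)+2) := by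
      rw [Complex.norm_real, Real.norm_of_nonneg (div_nonneg (lam_nonneg ε) (by positivity))]
    have hs : ‖∑ i, ∑ j, t i j‖ ≤ ∑ i, ∑ j, ‖t i j‖ :=
      (norm_sum_le _ _).trans (Finset.sum_le_sum fun i _ => norm_sum_le _ _)
    rw [norm_mul, norm_mul, hl]
    have h0 : 0 ≤ lam 2 ε / ((n:ℝ)+2) := div_nonneg (lam_nonneg ε) (by positivity)
    calc _ ≤ 1 * (lam 2 ε / ((n:ℝ)+2)) * ∑ i, ∑ j, ‖t i j‖ := by gcongr
      _ = _ := by ring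
  have hs0 := sigma_nonneg w ε k
  have hsob : sobTerm (0:ℝ) (SepsA w ε (Aplus 2 w ε ψ)) k
      = (sigma' w ε k * ‖Aplus 2 w ε ψ k‖) ^ 2 := by
    simp only [sobTerm, SepsA, norm_mul, Complex.norm_real, mul_zero, Real.rpow_zero, one_mul,
      Real.norm_of_nonneg hs0]
  rw [hsob]
  have hcs : (∑ i, ∑ j, sigma' w ε k * ‖t i j‖) ^ 2 ≤
      ((n:ℝ)+2)^2 * ∑ i, ∑ j, (sigma' w ε k * ‖t i j‖) ^ 2 := by
    have := sq_sum_le_card_mul_sum_sq (s := (Finset.univ : Finset (Fin (n+2) × Fin (n+2))))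
      (f := fun p => sigma' w ε k * ‖t p.1 p.2‖)
    rw [Fintype.sum_prod_type, Fintype.sum_prod_type] at this
    refine this.trans (le_of_eq ?_)
    simp
    left; ring
  have hn : (0:ℝ) < (n:ℝ) + 2 := by positivity
  calc (sigma' w ε k * ‖Aplus 2 w ε ψ k‖) ^ 2
      ≤ (sigma' w ε k * (lam 2 ε / ((n:ℝ)+2) * ∑ i, ∑ j, ‖t i j‖)) ^ 2 := by gcongr
    _ = (lam 2 ε / ((n:ℝ)+2)) ^ 2 * (∑ i, ∑ j, sigma' w ε k * ‖t i j‖) ^ 2 := by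
        simp only [← Finset.mul_sum]; ring
    _ ≤ (lam 2 ε / ((n:ℝ)+2)) ^ 2 *
          (((n:ℝ)+2)^2 * ∑ i, ∑ j, (sigma' w ε k * ‖t i j‖) ^ 2) := by gcongr
    _ = ∑ i, ∑ j, lam 2 ε ^ 2 * (sigma' w ε k * ‖t i j‖) ^ 2 := by
        simp only [← Finset.mul_sum]; field_simp
    _ ≤ _ := by
        refine Finset.sum_le_sum fun i _ => Finset.sum_le_sum fun j _ => ?_
        rw [mul_assoc]
        refine mul_le_mul_of_nonneg_left ?_ (sq_nonneg _)
        by_cases h : i < j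
        · simp only [ht, h, dif_pos]
          exact pair_bound w ε ψ k i j h
        · simp [ht, h]

lemma sob_half {n : ℕ} (ψ : Chaos 2 n) (k) :
    sobTerm (1/2:ℝ) ψ k = wSq k / 2 * ‖ψ k‖ ^ 2 := by
  simp [sobTerm]

lemma Fm_summable {n : ℕ} (ψ : Chaos 2 (n+1)) (hs : Symm ψ) (h : Summable (sobTerm (1/2:ℝ) ψ)) :
    Summable (Fm ψ) ∧
      ((n:ℝ)+1) * ∑' p, Fm ψ p = 2 * (∑' x, bw x) * ∑' k, sobTerm (1/2:ℝ) ψ k := by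
  have hsum : ∀ a : Fin (n+1), Summable fun k => nsq (k a) * ‖ψ k‖ ^ 2 := by
    intro a
    refine Summable.of_nonneg_of_le (fun k => mul_nonneg (nsq_nonneg _) (sq_nonneg _))
      (fun k => ?_) (h.mul_left 2)
    rw [sob_half]
    have := mul_le_mul_of_nonneg_right (nsq_le_wSq k a) (sq_nonneg ‖ψ k‖)
    linarith
  have heq : ∀ a : Fin (n+1), ∑' k : Fin (n+1) → ZLat 2, nsq (k a) * ‖ψ k‖ ^ 2 =
      ∑' k : Fin (n+1) → ZLat 2, nsq (k 0) * ‖ψ k‖ ^ 2 := by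
    intro a
    rw [← (Equiv.arrowCongr (Equiv.swap 0 a) (Equiv.refl (ZLat 2))).tsum_eq
      (fun k : Fin (n+1) → ZLat 2 => nsq (k a) * ‖ψ k‖ ^ 2)]
    refine tsum_congr fun k => ?_
    have : (Equiv.arrowCongr (Equiv.swap 0 a) (Equiv.refl (ZLat 2))) k = k ∘ (Equiv.swap 0 a) := by
      funext b; simp [Equiv.arrowCongr]
    rw [this, hs]
    simp
  have htot : 2 * ∑' k, sobTerm (1/2:ℝ) ψ k =
      ((n:ℝ)+1) * ∑' k : Fin (n+1) → ZLat 2, nsq (k 0) * ‖ψ k‖ ^ 2 := by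
    rw [← tsum_mul_left]
    have : ∀ k, 2 * sobTerm (1/2:ℝ) ψ k = ∑ a : Fin (n+1), nsq (k a) * ‖ψ k‖ ^ 2 := by
      intro k
      rw [sob_half, ← Finset.sum_mul]; unfold wSq; ring
    simp only [this]
    rw [Summable.tsum_finsetSum (fun a _ => hsum a)]
    simp only [heq]
    simp
  have hS : Summable (Fm ψ) :=
    bw_summable.mul_of_nonneg (hsum 0) (fun x => sq_nonneg _)
      (fun k => mul_nonneg (nsq_nonneg _) (sq_nonneg _))
  refine ⟨hS, ?_⟩
  have : ∑' p, Fm ψ p = (∑' x, bw x) * ∑' k : Fin (n+1) → ZLat 2, nsq (k 0) * ‖ψ k‖ ^ 2 :=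
    (bw_summable.tsum_mul_tsum (hsum 0) hS).symm
  rw [this]
  linear_combination (-(∑' x, bw x)) * htot

lemma pair_sum {n : ℕ} (ψ : Chaos 2 (n+1)) (hF : Summable (Fm ψ)) (i j : Fin (n+2)) :
    Summable (fun k => if h : i < j then Fm ψ (phi i j h k) else 0) ∧
    ∑' k, (if h : i < j then Fm ψ (phi i j h k) else 0) ≤ ∑' p, Fm ψ p := by
  by_cases h : i < j
  · simp only [h, dif_pos]
    exact ⟨hF.comp_injective (phi_inj i j h),
      tsum_comp_le_tsum_of_inj hF (Fm_nonneg ψ) (phi_inj i j h)⟩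
  · simp only [h, dif_neg, not_false_eq_true, tsum_zero]
    exact ⟨summable_zero, tsum_nonneg (Fm_nonneg ψ)⟩

/-- `L²` bound for the ansatz operator, `d = 2`.
There is `C > 0`, independent of `ε` and `n`, such that for every `ε ∈ (0,1)`, every
`n ≥ 1` (chaos level `n+1` here) and every symmetric `ψ ∈ ΓL²_{n+1}` with
`‖(−L₀)^{1/2}ψ‖ < ∞`, one has `‖S^ε A⁺_ε ψ‖ ≤ C λ_ε (n+1) ‖(−L₀)^{1/2}ψ‖`,
the left-hand norm being the Fock norm on `ΓL²_{n+2}`. -/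
theorem stmt17 (w : Fin 2 → ℝ) (hw : w ≠ 0) :
    ∃ C : ℝ, 0 < C ∧
      ∀ ε : ℝ, 0 < ε → ε < 1 →
      ∀ (n : ℕ) (ψ : Chaos 2 (n+1)),
        Symm ψ → SuppOk ψ → Summable (sobTerm (1/2 : ℝ) ψ) →
        Summable (sobTerm (0 : ℝ) (SepsA w ε (Aplus 2 w ε ψ))) ∧
        Real.sqrt (sobSq (0 : ℝ) (SepsA w ε (Aplus 2 w ε ψ))) ≤
          C * lam 2 ε * ((n:ℝ)+1) * Real.sqrt (sobSq (1/2 : ℝ) ψ) := by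
  set B := ∑' x, bw x with hB
  have hB0 : 0 ≤ B := tsum_nonneg fun x => sq_nonneg _
  have hw0 := wnSq_nonneg w
  refine ⟨Real.sqrt (64 * wnSq w * B) + 1, by positivity, ?_⟩
  intro ε _ _ n ψ hs _ h
  obtain ⟨hF, hFe⟩ := Fm_summable ψ hs h
  set T := ∑' k, sobTerm (1/2:ℝ) ψ k with hT
  set P := ∑' p, Fm ψ p with hP
  have hl := lam_nonneg ε
  set c := lam 2 ε ^ 2 * (4 * wnSq w) with hc
  have hc0 : 0 ≤ c := by positivity
  have hnn : ∀ k, 0 ≤ sobTerm (0:ℝ) (SepsA w ε (Aplus 2 w ε ψ)) k := fun k => by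
    simp only [sobTerm, mul_zero, Real.rpow_zero, one_mul]; positivity
  have hsm : ∀ i j : Fin (n+2), Summable fun k => c * (if h : i < j then Fm ψ (phi i j h k) else 0) :=
    fun i j => (pair_sum ψ hF i j).1.mul_left c
  have hsm1 : ∀ i : Fin (n+2), Summable fun k =>
      ∑ j : Fin (n+2), c * (if h : i < j then Fm ψ (phi i j h k) else 0) :=
    fun i => summable_sum fun j _ => hsm i j
  have hsm2 : Summable fun k => ∑ i : Fin (n+2),
      ∑ j : Fin (n+2), c * (if h : i < j then Fm ψ (phi i j h k) else 0) :=
    summable_sum fun i _ => hsm1 i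
  have hS : Summable (sobTerm (0:ℝ) (SepsA w ε (Aplus 2 w ε ψ))) :=
    Summable.of_nonneg_of_le hnn (point_bound w ε ψ) hsm2
  refine ⟨hS, ?_⟩
  have hle : ∑' k, sobTerm (0:ℝ) (SepsA w ε (Aplus 2 w ε ψ)) k ≤ ((n:ℝ)+2)^2 * (c * P) := by
    refine (hS.tsum_le_tsum (point_bound w ε ψ) hsm2).trans ?_
    rw [Summable.tsum_finsetSum (fun i _ => hsm1 i)]
    calc _ ≤ ∑ i : Fin (n+2), ∑ j : Fin (n+2), c * P := by
          refine Finset.sum_le_sum fun i _ => ?_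
          rw [Summable.tsum_finsetSum (fun j _ => hsm i j)]
          refine Finset.sum_le_sum fun j _ => ?_
          rw [tsum_mul_left]
          exact mul_le_mul_of_nonneg_left (pair_sum ψ hF i j).2 hc0
      _ = _ := by simp; ring
  have hT0 : 0 ≤ T := tsum_nonneg fun k => by
    rw [sob_half]; have := wSq_nonneg k; positivity
  have hn1 : (0:ℝ) < (n:ℝ) + 1 := by positivity
  have hPe : P = 2 * B * T / ((n:ℝ)+1) := by
    rw [eq_div_iff hn1.ne', ← hFe]; ring
  have hkey : sobSq (0:ℝ) (SepsA w ε (Aplus 2 w ε ψ)) ≤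
      (64 * wnSq w * B) * (lam 2 ε * ((n:ℝ)+1)) ^ 2 * sobSq (1/2:ℝ) ψ := by
    unfold sobSq
    rw [← hT, Nat.factorial_succ (n+1)]
    push_cast
    have hf : (0:ℝ) < ((n+1).factorial : ℝ) := by positivity
    have hcube : ((n:ℝ)+2)^3 ≤ 8 * ((n:ℝ)+1)^3 := by
      have : ((n:ℝ)+2)^3 ≤ (2*((n:ℝ)+1))^3 := by gcongr; linarith [(Nat.cast_nonneg n : (0:ℝ) ≤ n)]
      linarith [mul_pow (2:ℝ) ((n:ℝ)+1) 3]
    calc _ ≤ ((n:ℝ)+1+1) * ((n+1).factorial : ℝ) * (((n:ℝ)+2)^2 * (c * P)) := by gcongr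
      _ = ((n:ℝ)+2)^3 * (((n+1).factorial : ℝ) * (c * (2 * B * T / ((n:ℝ)+1)))) := by
          rw [hPe]; ring
      _ ≤ (8 * ((n:ℝ)+1)^3) * (((n+1).factorial : ℝ) * (c * (2 * B * T / ((n:ℝ)+1)))) := by
          gcongr
      _ = _ := by rw [hc]; field_simp; ring
  calc _ ≤ Real.sqrt ((64 * wnSq w * B) * (lam 2 ε * ((n:ℝ)+1)) ^ 2 * sobSq (1/2:ℝ) ψ) :=
        Real.sqrt_le_sqrt hkey
    _ = Real.sqrt (64 * wnSq w * B) * (lam 2 ε * ((n:ℝ)+1)) * Real.sqrt (sobSq (1/2:ℝ) ψ) := by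
        rw [Real.sqrt_mul (by positivity), Real.sqrt_mul (by positivity),
          Real.sqrt_sq (by positivity)]
    _ ≤ _ := by
        rw [mul_assoc (_ + 1) (lam 2 ε)]
        gcongr
        linarith

end SBE
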